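/- Let d be a design, λ0 ∈ ℝ, and τ0 ∈ ℝ^t with 1_t′τ0 = 0, τ0 ≠ 0, and suppose (στ0)′ C_{d22} (στ0) > 0 for every permutation σ of {1,…,t}. Let d* be the design with weights p*_s = (1/t!) ∑_σ p_{σ⁻¹∘s}. Then d* is a symmetric design, τ0′ C_{d*22} τ0 > 0, and in the Loewner order (1/t!) ∑_σ C_{σd,τ0,λ0} ≤ C_{d*,τ0,λ0}. -/

import Mathlib

open Matrix MeasureTheory
open scoped Classical

noncomputable section

/-- A treatment sequence: assigns a treatment in `Fin t` to each period in `Fin p`. -/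
abbrev TrtSeq (p t : ℕ) := Fin p → Fin t

/-- Treatment/period incidence matrix `T_s`. -/
def Tmat {p t : ℕ} (s : TrtSeq p t) : Matrix (Fin p) (Fin t) ℝ :=
  Matrix.of fun k i => if s k = i then 1 else 0

/-- Carryover incidence matrix `F_s`: first row zero, row `k` records the treatment
in period `k-1`. -/
def Fmat {p t : ℕ} (s : TrtSeq p t) : Matrix (Fin p) (Fin t) ℝ :=
  Matrix.of fun k i =>
    if (k : ℕ) = 0 then 0
    else if s ⟨(k : ℕ) - 1, Nat.lt_of_le_of_lt (Nat.sub_le _ _) k.isLt⟩ = i then 1 else 0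

/-- The all-ones `m × m` matrix `J_m`. -/
def Jmat (m : ℕ) : Matrix (Fin m) (Fin m) ℝ := Matrix.of fun _ _ => 1

/-- `B_t = I_t - J_t / t`. -/
def Bmat (t : ℕ) : Matrix (Fin t) (Fin t) ℝ := 1 - ((t : ℝ))⁻¹ • Jmat t

/-- `B̃ = Σ⁻¹ - Σ⁻¹ J_p Σ⁻¹ / (1_p' Σ⁻¹ 1_p)`. -/
def Btil {p : ℕ} (S : Matrix (Fin p) (Fin p) ℝ) : Matrix (Fin p) (Fin p) ℝ :=
  S⁻¹ - (((fun _ => (1 : ℝ)) : Fin p → ℝ) ⬝ᵥ (S⁻¹ *ᵥ fun _ => (1 : ℝ)))⁻¹ •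
    (S⁻¹ * Jmat p * S⁻¹)

/-- `G_1(s) = T_s`, `G_2(s) = F_s`. -/
def Gmat {p t : ℕ} (i : Fin 2) (s : TrtSeq p t) : Matrix (Fin p) (Fin t) ℝ :=
  if i = 0 then Tmat s else Fmat s

/-- An approximate design: nonnegative weights summing to one. -/
def IsDesign {p t : ℕ} (w : TrtSeq p t → ℝ) : Prop :=
  (∀ s, 0 ≤ w s) ∧ ∑ s : TrtSeq p t, w s = 1

/-- `Ĉ_{sij} = B_t G_i(s)' B̃ G_j(s) B_t`. -/
def Chat {p t : ℕ} (S : Matrix (Fin p) (Fin p) ℝ) (s : TrtSeq p t) (i j : Fin 2) :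
    Matrix (Fin t) (Fin t) ℝ :=
  Bmat t * (Gmat i s)ᵀ * Btil S * Gmat j s * Bmat t

/-- `c_{sij} = tr Ĉ_{sij}`. -/
def cseq {p t : ℕ} (S : Matrix (Fin p) (Fin p) ℝ) (s : TrtSeq p t) (i j : Fin 2) : ℝ :=
  (Chat S s i j).trace

/-- `Ĉ_{dij} = n ∑_s p_s Ĉ_{sij}`. -/
def ChatD {p t : ℕ} (n : ℕ) (S : Matrix (Fin p) (Fin p) ℝ) (w : TrtSeq p t → ℝ)
    (i j : Fin 2) : Matrix (Fin t) (Fin t) ℝ :=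
  (n : ℝ) • ∑ s : TrtSeq p t, w s • Chat S s i j

/-- `C_{dij} = Ĉ_{dij} - n (∑_s p_s G_i(s) B_t)' B̃ (∑_s p_s G_j(s) B_t)`. -/
def CD {p t : ℕ} (n : ℕ) (S : Matrix (Fin p) (Fin p) ℝ) (w : TrtSeq p t → ℝ)
    (i j : Fin 2) : Matrix (Fin t) (Fin t) ℝ :=
  ChatD n S w i j -
    (n : ℝ) • ((∑ s : TrtSeq p t, w s • (Gmat i s * Bmat t))ᵀ * Btil S *
      (∑ s : TrtSeq p t, w s • (Gmat j s * Bmat t)))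

/-- `c_{dij} = tr Ĉ_{dij} = n ∑_s p_s c_{sij}`. -/
def cD {p t : ℕ} (n : ℕ) (S : Matrix (Fin p) (Fin p) ℝ) (w : TrtSeq p t → ℝ)
    (i j : Fin 2) : ℝ :=
  (ChatD n S w i j).trace

/-- Fisher information matrix `C_{d,τ0,λ0}` for the direct treatment effects under the
proportional model. -/
def CInfo {p t : ℕ} (n : ℕ) (S : Matrix (Fin p) (Fin p) ℝ) (w : TrtSeq p t → ℝ)
    (τ0 : Fin t → ℝ) (l0 : ℝ) : Matrix (Fin t) (Fin t) ℝ :=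
  CD n S w 0 0 + l0 • (CD n S w 0 1 + CD n S w 1 0) + (l0 ^ 2) • CD n S w 1 1 -
    (τ0 ⬝ᵥ (CD n S w 1 1 *ᵥ τ0))⁻¹ •
      ((CD n S w 0 1 + l0 • CD n S w 1 1) * vecMulVec τ0 τ0 *
        (CD n S w 1 0 + l0 • CD n S w 1 1))

/-- Permutation matrix `S_σ` with `(S_σ)_{j,i} = 1` iff `i = σ j`. -/
def Smat {t : ℕ} (σ : Equiv.Perm (Fin t)) : Matrix (Fin t) (Fin t) ℝ :=
  Matrix.of fun j i => if i = σ j then 1 else 0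

/-- The relabelled sequence `σ ∘ s`. -/
def permSeq {p t : ℕ} (σ : Equiv.Perm (Fin t)) (s : TrtSeq p t) : TrtSeq p t := fun k => σ (s k)

/-- The design `σ d`, with weights `(σd)_s = p_{σ⁻¹ ∘ s}`. -/
def permDesign {p t : ℕ} (σ : Equiv.Perm (Fin t)) (w : TrtSeq p t → ℝ) : TrtSeq p t → ℝ :=
  fun s => w (permSeq σ⁻¹ s)

/-- A design is symmetric if its weights are invariant under treatment relabelling. -/
def IsSymmetricDesign {p t : ℕ} (w : TrtSeq p t → ℝ) : Prop :=
  ∀ (σ : Equiv.Perm (Fin t)) (s : TrtSeq p t), w (permSeq σ s) = w s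

/-- The symmetrized design `d*` with weights `p*_s = (1/t!) ∑_σ p_{σ⁻¹ ∘ s}`. -/
def symmetrize {p t : ℕ} (w : TrtSeq p t → ℝ) : TrtSeq p t → ℝ :=
  fun s => ((Nat.factorial t : ℝ))⁻¹ * ∑ σ : Equiv.Perm (Fin t), permDesign σ w s

/-- `q_s(x) = c_{s11} + 2 c_{s12} x + c_{s22} x²`. -/
def qSeq {p t : ℕ} (S : Matrix (Fin p) (Fin p) ℝ) (s : TrtSeq p t) (x : ℝ) : ℝ :=
  cseq S s 0 0 + 2 * cseq S s 0 1 * x + cseq S s 1 1 * x ^ 2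

/-- `q(x) = max_{s ∈ S} q_s(x)`. -/
def qMax (p t : ℕ) (S : Matrix (Fin p) (Fin p) ℝ) (x : ℝ) : ℝ :=
  sSup (Set.range fun s : TrtSeq p t => qSeq S s x)

/-- `y* = inf_x q(x)`. -/
def yStar (p t : ℕ) (S : Matrix (Fin p) (Fin p) ℝ) : ℝ := ⨅ x : ℝ, qMax p t S x

/-- `q_d(x) = ∑_s p_s q_s(x)`. -/
def qD {p t : ℕ} (S : Matrix (Fin p) (Fin p) ℝ) (w : TrtSeq p t → ℝ) (x : ℝ) : ℝ :=
  ∑ s : TrtSeq p t, w s * qSeq S s x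

/-- `x_d = -c_{d12}/c_{d22}`. -/
def xD {p t : ℕ} (n : ℕ) (S : Matrix (Fin p) (Fin p) ℝ) (w : TrtSeq p t → ℝ) : ℝ :=
  -(cD n S w 0 1) / cD n S w 1 1

/-- An exchangeable prior: a probability measure on `{τ : 1'τ = 0, τ ≠ 0}` that is
invariant under all coordinate permutations of `ℝ^t`. -/
def IsExchangeablePrior {t : ℕ} (g : Measure (Fin t → ℝ)) : Prop :=
  IsProbabilityMeasure g ∧
    g {τ : Fin t → ℝ | ¬((∑ i, τ i) = 0 ∧ τ ≠ 0)} = 0 ∧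
    ∀ σ : Equiv.Perm (Fin t), Measure.map (fun τ i => τ (σ i)) g = g

/-- `m_d(τ0) = min {ℓ' C_{d,τ0,λ0} ℓ : 1'ℓ = 0, ℓ'ℓ = 1}`. -/
def mD {p t : ℕ} (n : ℕ) (S : Matrix (Fin p) (Fin p) ℝ) (w : TrtSeq p t → ℝ) (l0 : ℝ)
    (τ0 : Fin t → ℝ) : ℝ :=
  sInf {v : ℝ | ∃ l : Fin t → ℝ, (∑ i, l i) = 0 ∧ l ⬝ᵥ l = 1 ∧
    v = l ⬝ᵥ (CInfo n S w τ0 l0 *ᵥ l)}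

/-- The E-criterion value `E_{g,λ0}(d) = ∫ m_d(τ0) g(dτ0)`. -/
def Ecrit {p t : ℕ} (n : ℕ) (S : Matrix (Fin p) (Fin p) ℝ) (g : Measure (Fin t → ℝ))
    (l0 : ℝ) (w : TrtSeq p t → ℝ) : ℝ :=
  ∫ τ0, mD n S w l0 τ0 ∂g

/-- Competing designs for E-optimality: designs with a.e. positive `τ0' C_{d22} τ0`
and `g`-integrable `m_d`. -/
def EAdmissible {p t : ℕ} (n : ℕ) (S : Matrix (Fin p) (Fin p) ℝ) (g : Measure (Fin t → ℝ))
    (l0 : ℝ) (w : TrtSeq p t → ℝ) : Prop :=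
  IsDesign w ∧ (∀ᵐ τ0 ∂g, 0 < τ0 ⬝ᵥ (CD n S w 1 1 *ᵥ τ0)) ∧
    Integrable (mD n S w l0) g

/-- `d` is `E_{g,λ0}`-optimal. -/
def EOptimal {p t : ℕ} (n : ℕ) (S : Matrix (Fin p) (Fin p) ℝ) (g : Measure (Fin t → ℝ))
    (l0 : ℝ) (w : TrtSeq p t → ℝ) : Prop :=
  ∀ w' : TrtSeq p t → ℝ, EAdmissible n S g l0 w' → Ecrit n S g l0 w' ≤ Ecrit n S g l0 w

/-- A pseudo symmetric design: treatments equireplicated in each period,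
and all `C_{dij}` completely symmetric. -/
def IsPseudoSymmetric {p t : ℕ} (n : ℕ) (S : Matrix (Fin p) (Fin p) ℝ)
    (w : TrtSeq p t → ℝ) : Prop :=
  (∀ (k : Fin p) (i : Fin t),
    (∑ s ∈ Finset.univ.filter fun s : TrtSeq p t => s k = i, w s) = 1 / (t : ℝ)) ∧
  ∀ i j : Fin 2, ∃ a b : ℝ, CD n S w i j = a • (1 : Matrix (Fin t) (Fin t) ℝ) + b • Jmat t

/-- Eigenvalues of a (Hermitian) matrix sorted increasingly with multiplicity. -/
def sortedEigs {t : ℕ} (C : Matrix (Fin t) (Fin t) ℝ) : Fin t → ℝ :=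
  if h : C.IsHermitian then (fun i => h.eigenvalues (Tuple.sort h.eigenvalues i))
  else fun _ => 0

/-- `Φ_D(C) = (∏_{i=1}^{t-1} a_i)^{1/(t-1)}` (eigenvalues sorted increasingly). -/
def PhiD {t : ℕ} (C : Matrix (Fin t) (Fin t) ℝ) : ℝ :=
  (∏ i ∈ Finset.univ.filter fun i : Fin t => (i : ℕ) ≠ 0, sortedEigs C i) ^ (((t : ℝ) - 1)⁻¹)

/-- `Φ_A(C) = (t-1)(∑_{i=1}^{t-1} a_i⁻¹)⁻¹` if `a_1 > 0`, else `0`. -/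
def PhiA {t : ℕ} (C : Matrix (Fin t) (Fin t) ℝ) : ℝ :=
  if ∀ i : Fin t, (i : ℕ) ≠ 0 → 0 < sortedEigs C i then
    ((t : ℝ) - 1) *
      (∑ i ∈ Finset.univ.filter fun i : Fin t => (i : ℕ) ≠ 0, (sortedEigs C i)⁻¹)⁻¹
  else 0

/-- `Φ_T(C) = tr(C)/(t-1)`. -/
def PhiT {t : ℕ} (C : Matrix (Fin t) (Fin t) ℝ) : ℝ := C.trace / ((t : ℝ) - 1)

/-- The criterion value `∫ Φ(C_{d,τ0,λ0}) g(dτ0)`. -/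
def PhiCrit {p t : ℕ} (n : ℕ) (S : Matrix (Fin p) (Fin p) ℝ)
    (Phi : Matrix (Fin t) (Fin t) ℝ → ℝ) (g : Measure (Fin t → ℝ)) (l0 : ℝ)
    (w : TrtSeq p t → ℝ) : ℝ :=
  ∫ τ0, Phi (CInfo n S w τ0 l0) ∂g

/-- Competing designs for a `Φ`-criterion. -/
def PhiAdmissible {p t : ℕ} (n : ℕ) (S : Matrix (Fin p) (Fin p) ℝ)
    (Phi : Matrix (Fin t) (Fin t) ℝ → ℝ) (g : Measure (Fin t → ℝ)) (l0 : ℝ)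
    (w : TrtSeq p t → ℝ) : Prop :=
  IsDesign w ∧ (∀ᵐ τ0 ∂g, 0 < τ0 ⬝ᵥ (CD n S w 1 1 *ᵥ τ0)) ∧
    Integrable (fun τ0 => Phi (CInfo n S w τ0 l0)) g

/-- `d` is `Φ_{g,λ0}`-optimal. -/
def PhiOptimal {p t : ℕ} (n : ℕ) (S : Matrix (Fin p) (Fin p) ℝ)
    (Phi : Matrix (Fin t) (Fin t) ℝ → ℝ) (g : Measure (Fin t → ℝ)) (l0 : ℝ)
    (w : TrtSeq p t → ℝ) : Prop :=
  ∀ w' : TrtSeq p t → ℝ, PhiAdmissible n S Phi g l0 w' →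
    PhiCrit n S Phi g l0 w' ≤ PhiCrit n S Phi g l0 w

/-- `H_1(s) = F_s`, `H_2(s) = T_s + λ0 F_s` (for estimating `λ`). -/
def Hmat {p t : ℕ} (l0 : ℝ) (i : Fin 2) (s : TrtSeq p t) : Matrix (Fin p) (Fin t) ℝ :=
  if i = 0 then Fmat s else Tmat s + l0 • Fmat s

/-- `Â_{sij} = B_t H_i(s)' B̃ H_j(s) B_t`. -/
def Ahat {p t : ℕ} (S : Matrix (Fin p) (Fin p) ℝ) (l0 : ℝ) (s : TrtSeq p t) (i j : Fin 2) :
    Matrix (Fin t) (Fin t) ℝ :=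
  Bmat t * (Hmat l0 i s)ᵀ * Btil S * Hmat l0 j s * Bmat t

/-- `h_{sij} = tr Â_{sij}`. -/
def hseq {p t : ℕ} (S : Matrix (Fin p) (Fin p) ℝ) (l0 : ℝ) (s : TrtSeq p t) (i j : Fin 2) : ℝ :=
  (Ahat S l0 s i j).trace

/-- `Â_{dij} = n ∑_s p_s Â_{sij}`. -/
def AhatD {p t : ℕ} (n : ℕ) (S : Matrix (Fin p) (Fin p) ℝ) (l0 : ℝ) (w : TrtSeq p t → ℝ)
    (i j : Fin 2) : Matrix (Fin t) (Fin t) ℝ :=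
  (n : ℝ) • ∑ s : TrtSeq p t, w s • Ahat S l0 s i j

/-- `A_{dij} = Â_{dij} - n (∑_s p_s H_i(s) B_t)' B̃ (∑_s p_s H_j(s) B_t)`. -/
def AD {p t : ℕ} (n : ℕ) (S : Matrix (Fin p) (Fin p) ℝ) (l0 : ℝ) (w : TrtSeq p t → ℝ)
    (i j : Fin 2) : Matrix (Fin t) (Fin t) ℝ :=
  AhatD n S l0 w i j -
    (n : ℝ) • ((∑ s : TrtSeq p t, w s • (Hmat l0 i s * Bmat t))ᵀ * Btil S *
      (∑ s : TrtSeq p t, w s • (Hmat l0 j s * Bmat t)))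

/-- `G` is a generalized inverse of `A`. -/
def IsGInv {t : ℕ} (A G : Matrix (Fin t) (Fin t) ℝ) : Prop := A * G * A = A

/-- `A_d(G) = A_{d11} - A_{d12} G A_{d21}` with `A_{d21} = A_{d12}'`. -/
def ADfun {p t : ℕ} (n : ℕ) (S : Matrix (Fin p) (Fin p) ℝ) (l0 : ℝ) (w : TrtSeq p t → ℝ)
    (G : Matrix (Fin t) (Fin t) ℝ) : Matrix (Fin t) (Fin t) ℝ :=
  AD n S l0 w 0 0 - AD n S l0 w 0 1 * G * (AD n S l0 w 0 1)ᵀ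

/-- `r_s(x) = h_{s11} + 2 h_{s12} x + h_{s22} x²`. -/
def rSeq {p t : ℕ} (S : Matrix (Fin p) (Fin p) ℝ) (l0 : ℝ) (s : TrtSeq p t) (x : ℝ) : ℝ :=
  hseq S l0 s 0 0 + 2 * hseq S l0 s 0 1 * x + hseq S l0 s 1 1 * x ^ 2

/-- `r(x) = max_s r_s(x)`. -/
def rMax (p t : ℕ) (S : Matrix (Fin p) (Fin p) ℝ) (l0 : ℝ) (x : ℝ) : ℝ :=
  sSup (Set.range fun s : TrtSeq p t => rSeq S l0 s x)

/-- `y_0 = inf_x r(x)`. -/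
def yZero (p t : ℕ) (S : Matrix (Fin p) (Fin p) ℝ) (l0 : ℝ) : ℝ := ⨅ x : ℝ, rMax p t S l0 x

/- With blocks `C_{dij}`, the joint information matrix of direct and carryover effects is `n` times
a weighted covariance of the incidence matrices over the sequences of the design. By the law of
total covariance it is therefore a concave function of the weights. The information matrix
`C_{d,τ0,λ0}` arises from it by pulling back along the Jacobian of `(τ, λ) ↦ (τ, λ τ)` at `(τ0, λ0)`
and eliminating `λ` by a Schur complement, which is monotone and concave in the Loewner order since
the Schur complement of `M` is the largest `A` with `fromBlocks A 0 0 0 ≤ M`. The symmetrized design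
is the uniform mixture of the relabelled designs. -/

section Loewner

open scoped MatrixOrder ComplexOrder

variable {κ m n 𝕜 : Type*} [Fintype κ] [RCLike 𝕜]

lemma sum_smul_le_sum_smul {c : κ → ℝ} (hc : ∀ a, 0 ≤ c a) {M N : κ → Matrix n n 𝕜}
    (h : ∀ a, M a ≤ N a) : ∑ a, c a • M a ≤ ∑ a, c a • N a := by
  refine Finset.sum_le_sum fun a _ ↦ ?_
  rw [Matrix.le_iff, ← smul_sub]
  exact PosSemidef.smul (h a) (hc a)

lemma conjTranspose_mul_mul_same_mono [Fintype n] [Finite m] {M N : Matrix n n 𝕜} (h : M ≤ N)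
    (B : Matrix n m 𝕜) : Bᴴ * M * B ≤ Bᴴ * N * B := by
  rw [Matrix.le_iff, ← Matrix.sub_mul, ← Matrix.mul_sub]
  exact PosSemidef.conjTranspose_mul_mul_same h B

lemma toBlocks₂₂_mono {M N : Matrix (m ⊕ n) (m ⊕ n) 𝕜} (h : M ≤ N) :
    M.toBlocks₂₂ ≤ N.toBlocks₂₂ :=
  PosSemidef.submatrix h Sum.inr

lemma posDef_of_posDef_of_le {M N : Matrix n n 𝕜} (hM : M.PosDef) (h : M ≤ N) : N.PosDef := by
  simpa using hM.add_posSemidef h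

lemma posDef_sum_smul {c : κ → ℝ} (hc₀ : ∀ a, 0 ≤ c a) (hc₁ : ∑ a, c a = 1)
    {M : κ → Matrix n n 𝕜} (hM : ∀ a, (M a).PosDef) : (∑ a, c a • M a).PosDef := by
  obtain ⟨b, -, hb⟩ : ∃ b ∈ Finset.univ, 0 < c b :=
    Finset.exists_lt_of_sum_lt (by simp [hc₁])
  rw [← Finset.add_sum_erase _ _ (Finset.mem_univ b)]
  exact ((hM b).smul hb).add_posSemidef
    (posSemidef_sum _ fun a _ ↦ (hM a).posSemidef.smul (hc₀ a))

end Loewner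

section SchurComplement

open scoped MatrixOrder ComplexOrder

variable {κ m n 𝕜 : Type*} [Fintype κ] [Finite m] [Fintype n] [DecidableEq n] [RCLike 𝕜]

/-- The Schur complement of the lower right block of a block matrix, that is, what remains of the
information on the first block of parameters once the second block is eliminated. The inverse is
the junk value `0` when the lower right block is singular. -/
def schurComplement (M : Matrix (m ⊕ n) (m ⊕ n) 𝕜) : Matrix m m 𝕜 :=
  M.toBlocks₁₁ - M.toBlocks₁₂ * M.toBlocks₂₂⁻¹ * M.toBlocks₂₁

lemma fromBlocks_zero_le_iff_le_schurComplement {M : Matrix (m ⊕ n) (m ⊕ n) 𝕜}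
    (hM : M.IsHermitian) (hM₂₂ : M.toBlocks₂₂.PosDef) {A : Matrix m m 𝕜} :
    fromBlocks A 0 0 0 ≤ M ↔ A ≤ schurComplement M := by
  have hM₂₁ : M.toBlocks₂₁ = M.toBlocks₁₂ᴴ := by
    ext i j
    exact (hM.apply (Sum.inr i) (Sum.inl j)).symm
  have hsub : M - fromBlocks A 0 0 0 =
      fromBlocks (M.toBlocks₁₁ - A) M.toBlocks₁₂ M.toBlocks₁₂ᴴ M.toBlocks₂₂ := by
    conv_lhs => rw [← fromBlocks_toBlocks M, sub_eq_add_neg, fromBlocks_neg, fromBlocks_add, hM₂₁]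
    simp [sub_eq_add_neg]
  have := hM₂₂.isUnit.invertible
  rw [Matrix.le_iff, Matrix.le_iff, hsub, PosDef.fromBlocks₂₂ _ _ hM₂₂, schurComplement, hM₂₁,
    sub_right_comm]

theorem sum_smul_schurComplement_le {c : κ → ℝ} (hc : ∀ a, 0 ≤ c a)
    {M : κ → Matrix (m ⊕ n) (m ⊕ n) 𝕜} (hM : ∀ a, (M a).IsHermitian)
    (hM₂₂ : ∀ a, (M a).toBlocks₂₂.PosDef) {N : Matrix (m ⊕ n) (m ⊕ n) 𝕜} (hN : N.IsHermitian)
    (hN₂₂ : N.toBlocks₂₂.PosDef) (hMN : ∑ a, c a • M a ≤ N) :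
    ∑ a, c a • schurComplement (M a) ≤ schurComplement N := by
  rw [← fromBlocks_zero_le_iff_le_schurComplement hN hN₂₂]
  calc fromBlocks (∑ a, c a • schurComplement (M a)) 0 0 0
      = ∑ a, c a • fromBlocks (schurComplement (M a)) 0 0 0 := by
        ext (i | i) (j | j) <;> simp [Matrix.sum_apply]
    _ ≤ ∑ a, c a • M a := sum_smul_le_sum_smul hc fun a ↦
        (fromBlocks_zero_le_iff_le_schurComplement (hM a) (hM₂₂ a)).2 le_rfl
    _ ≤ N := hMN

end SchurComplement

section WeightedCov

lemma sum_mixture_smul {ι κ R E : Type*} [Fintype ι] [Fintype κ] [CommSemiring R]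
    [AddCommMonoid E] [Module R E] (c : κ → R) (v : κ → ι → R) (f : ι → E) :
    ∑ s, (∑ a, c a • v a) s • f s = ∑ a, c a • ∑ s, v a s • f s := by
  simpa only [Fintype.linearCombination_apply, map_smul] using
    map_sum (Fintype.linearCombination R f) (fun a ↦ c a • v a) Finset.univ

variable {ι κ m k l k' l' R : Type*} [Fintype ι] [Fintype κ] [Fintype m] [CommRing R]

/-- The cross-covariance, with respect to the bilinear form of `B`, of two matrix-valued functions
on a finite set carrying the weights `w`. The weights are not normalised: this is a covariance in
the usual sense when they sum to one. -/
def weightedCov (B : Matrix m m R) (w : ι → R) (X : ι → Matrix m k R) (Y : ι → Matrix m l R) :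
    Matrix k l R :=
  ∑ s, w s • ((X s)ᵀ * B * Y s) - (∑ s, w s • X s)ᵀ * B * ∑ s, w s • Y s

variable (B : Matrix m m R) (w : ι → R)

lemma weightedCov_transpose (X : ι → Matrix m k R) (Y : ι → Matrix m l R) :
    (weightedCov B w X Y)ᵀ = weightedCov Bᵀ w Y X := by
  simp only [weightedCov, transpose_sub, transpose_sum, transpose_smul, transpose_mul,
    transpose_transpose, Matrix.mul_assoc]

lemma weightedCov_mul [Fintype k] [Fintype l] (X : ι → Matrix m k R) (Y : ι → Matrix m l R)
    (P : Matrix k k' R) (Q : Matrix l l' R) :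
    weightedCov B w (fun s ↦ X s * P) (fun s ↦ Y s * Q) = Pᵀ * weightedCov B w X Y * Q := by
  have hX : ∑ s, w s • (X s * P) = (∑ s, w s • X s) * P := by
    simp only [Matrix.sum_mul, Matrix.smul_mul]
  have hY : ∑ s, w s • (Y s * Q) = (∑ s, w s • Y s) * Q := by
    simp only [Matrix.sum_mul, Matrix.smul_mul]
  have hXY : ∑ s, w s • ((X s * P)ᵀ * B * (Y s * Q)) =
      Pᵀ * (∑ s, w s • ((X s)ᵀ * B * Y s)) * Q := by
    simp only [Matrix.mul_sum, Matrix.sum_mul, Matrix.mul_smul, Matrix.smul_mul, transpose_mul,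
      Matrix.mul_assoc]
  rw [weightedCov, weightedCov, hX, hY, hXY]
  simp only [Matrix.mul_sub, Matrix.sub_mul, transpose_mul, Matrix.mul_assoc]

lemma weightedCov_fromCols (X : ι → Matrix m k R) (Y : ι → Matrix m l R) :
    weightedCov B w (fun s ↦ fromCols (X s) (Y s)) (fun s ↦ fromCols (X s) (Y s)) =
      fromBlocks (weightedCov B w X X) (weightedCov B w X Y)
        (weightedCov B w Y X) (weightedCov B w Y Y) := by
  ext (i | i) (j | j) <;>
    simp [weightedCov, Matrix.mul_apply, Matrix.sum_apply]

lemma weightedCov_comp_symm (e : ι ≃ κ) (X : κ → Matrix m k R) (Y : κ → Matrix m l R) :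
    weightedCov B (w ∘ e.symm) X Y = weightedCov B w (X ∘ e) (Y ∘ e) := by
  simp only [weightedCov, ← e.sum_comp, Function.comp_apply, Equiv.symm_apply_apply]

lemma weightedCov_sum_smul (c : κ → R) (v : κ → ι → R) (X : ι → Matrix m k R)
    (Y : ι → Matrix m l R) :
    weightedCov B (∑ a, c a • v a) X Y = ∑ a, c a • weightedCov B (v a) X Y +
      weightedCov B c (fun a ↦ ∑ s, v a s • X s) (fun a ↦ ∑ s, v a s • Y s) := by
  simp only [weightedCov, sum_mixture_smul, smul_sub, Finset.sum_sub_distrib]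
  abel

variable {w} in
lemma weightedCov_eq_sum_centered (hw : ∑ s, w s = 1) (X : ι → Matrix m k R)
    (Y : ι → Matrix m l R) :
    weightedCov B w X Y =
      ∑ s, w s • ((X s - ∑ r, w r • X r)ᵀ * B * (Y s - ∑ r, w r • Y r)) := by
  set μ := ∑ r, w r • X r with hμ
  set ν := ∑ r, w r • Y r with hν
  have hleft : ∑ s, w s • ((X s)ᵀ * B * ν) = μᵀ * B * ν := by
    simp only [hμ, transpose_sum, transpose_smul, Matrix.sum_mul, Matrix.smul_mul]
  have hright : ∑ s, w s • (μᵀ * B * Y s) = μᵀ * B * ν := by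
    simp only [hν, Matrix.mul_sum, Matrix.mul_smul]
  simp only [transpose_sub, Matrix.sub_mul, Matrix.mul_sub, smul_sub, Finset.sum_sub_distrib,
    hleft, hright, ← Finset.sum_smul, hw, one_smul, weightedCov, ← hμ, ← hν]
  abel

end WeightedCov

section Concavity

open scoped MatrixOrder

variable {ι κ m k : Type*} [Fintype ι] [Fintype κ] [Fintype m] {B : Matrix m m ℝ}

lemma isHermitian_weightedCov_self (hB : B.IsHermitian) (w : ι → ℝ) (X : ι → Matrix m k ℝ) :
    (weightedCov B w X X).IsHermitian := by
  rw [IsHermitian, conjTranspose_eq_transpose_of_trivial] at hB ⊢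
  rw [weightedCov_transpose, hB]

lemma posSemidef_weightedCov_self [Finite k] (hB : B.PosSemidef) {w : ι → ℝ} (hw₀ : ∀ s, 0 ≤ w s)
    (hw₁ : ∑ s, w s = 1) (X : ι → Matrix m k ℝ) : (weightedCov B w X X).PosSemidef := by
  rw [weightedCov_eq_sum_centered B hw₁]
  refine posSemidef_sum _ fun s _ ↦ PosSemidef.smul ?_ (hw₀ s)
  simpa only [conjTranspose_eq_transpose_of_trivial] using hB.conjTranspose_mul_mul_same _

theorem sum_smul_weightedCov_le [Finite k] (hB : B.PosSemidef) {c : κ → ℝ} (hc₀ : ∀ a, 0 ≤ c a)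
    (hc₁ : ∑ a, c a = 1) (v : κ → ι → ℝ) (X : ι → Matrix m k ℝ) :
    ∑ a, c a • weightedCov B (v a) X X ≤ weightedCov B (∑ a, c a • v a) X X := by
  rw [Matrix.le_iff, weightedCov_sum_smul, add_sub_cancel_left]
  exact posSemidef_weightedCov_self hB hc₀ hc₁ _

end Concavity

section Projection

open scoped ComplexOrder

variable {m 𝕜 : Type*} [Fintype m] [RCLike 𝕜]

-- The matrix is `Qᴴ * A * Q` for the `A`-orthogonal projection `Q` onto the complement of `e`.
lemma posSemidef_sub_inv_smul_vecMulVec {A : Matrix m m 𝕜} (hA : A.PosSemidef) (e : m → 𝕜) :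
    (A - (star e ⬝ᵥ (A *ᵥ e))⁻¹ • (A * vecMulVec e (star e) * A)).PosSemidef := by
  have hr : star (star e ⬝ᵥ (A *ᵥ e))⁻¹ = (star e ⬝ᵥ (A *ᵥ e))⁻¹ := by
    rw [star_inv₀, (IsSelfAdjoint.of_nonneg (hA.dotProduct_mulVec_nonneg e)).star_eq]
  set r := star e ⬝ᵥ (A *ᵥ e)
  set J := vecMulVec e (star e) with hJ
  have hJt : Jᴴ = J := by rw [hJ, conjTranspose_vecMulVec, star_star]
  have hAJAJA : A * J * A * J * A = r • (A * J * A) := by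
    have hJAJ : J * (A * J) = r • J := by
      rw [hJ, mul_vecMulVec, vecMulVec_mul_vecMulVec, vecMulVec_smul]
    rw [Matrix.mul_assoc A J A, Matrix.mul_assoc A (J * A) J, Matrix.mul_assoc J A J, hJAJ,
      Matrix.mul_smul, Matrix.smul_mul, Matrix.mul_assoc A J A]
  have hQ : (1 - r⁻¹ • (J * A))ᴴ * A * (1 - r⁻¹ • (J * A)) = A - r⁻¹ • (A * J * A) := by
    have hr' : r⁻¹ * (r⁻¹ * r) = r⁻¹ := by simpa [mul_assoc] using mul_self_mul_inv r⁻¹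
    simp only [conjTranspose_sub, conjTranspose_one, conjTranspose_smul, conjTranspose_mul,
      hA.isHermitian.eq, hJt, hr, Matrix.sub_mul, Matrix.mul_sub, Matrix.one_mul, Matrix.mul_one,
      Matrix.smul_mul, Matrix.mul_smul, hAJAJA, smul_sub, smul_smul, hr', ← Matrix.mul_assoc,
      sub_self, sub_zero]
  exact hQ ▸ hA.conjTranspose_mul_mul_same _

end Projection

section Designs

open scoped MatrixOrder

variable {p t : ℕ}

lemma posSemidef_Btil {S : Matrix (Fin p) (Fin p) ℝ} (hS : S.PosDef) : (Btil S).PosSemidef := by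
  have hJ : Jmat p = vecMulVec (fun _ ↦ 1) (fun _ ↦ 1) := by
    ext
    simp [Jmat, vecMulVec]
  rw [Btil, hJ]
  exact posSemidef_sub_inv_smul_vecMulVec hS.inv.posSemidef fun _ ↦ 1

lemma Bmat_transpose : (Bmat t)ᵀ = Bmat t := by
  simp only [Bmat, transpose_sub, transpose_one, transpose_smul]
  rfl

variable (n : ℕ) (S : Matrix (Fin p) (Fin p) ℝ) (w : TrtSeq p t → ℝ) (τ0 : Fin t → ℝ) (l0 : ℝ)

lemma CD_eq_smul_weightedCov (i j : Fin 2) :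
    CD n S w i j = (n : ℝ) •
      weightedCov (Btil S) w (fun s ↦ Gmat i s * Bmat t) (fun s ↦ Gmat j s * Bmat t) := by
  simp only [CD, ChatD, Chat, weightedCov, smul_sub, transpose_mul, Bmat_transpose,
    Matrix.mul_assoc]

/-- The joint information matrix of the direct and the carryover treatment effects, with blocks
`C_{dij}`. -/
def jointInfo : Matrix (Fin t ⊕ Fin t) (Fin t ⊕ Fin t) ℝ :=
  fromBlocks (CD n S w 0 0) (CD n S w 0 1) (CD n S w 1 0) (CD n S w 1 1)

/-- The Jacobian at `(τ0, λ0)` of the parametrization `(τ, λ) ↦ (τ, λ τ)` of the direct and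
carryover effects in the proportional model. -/
def proportionalJacobian : Matrix (Fin t ⊕ Fin t) (Fin t ⊕ Unit) ℝ :=
  fromBlocks 1 0 (l0 • 1) (replicateCol Unit τ0)

/-- The joint information matrix of `τ` and `λ` at `(τ0, λ0)` in the proportional model. -/
def proportionalInfo : Matrix (Fin t ⊕ Unit) (Fin t ⊕ Unit) ℝ :=
  (proportionalJacobian τ0 l0)ᴴ * jointInfo n S w * proportionalJacobian τ0 l0

lemma jointInfo_eq_smul_weightedCov :
    jointInfo n S w = (n : ℝ) • weightedCov (Btil S) w
      (fun s ↦ fromCols (Gmat 0 s * Bmat t) (Gmat 1 s * Bmat t))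
      (fun s ↦ fromCols (Gmat 0 s * Bmat t) (Gmat 1 s * Bmat t)) := by
  simp only [jointInfo, weightedCov_fromCols, fromBlocks_smul, CD_eq_smul_weightedCov]

lemma proportionalInfo_eq_fromBlocks :
    proportionalInfo n S w τ0 l0 = fromBlocks
      (CD n S w 0 0 + l0 • (CD n S w 0 1 + CD n S w 1 0) + l0 ^ 2 • CD n S w 1 1)
      ((CD n S w 0 1 + l0 • CD n S w 1 1) * replicateCol Unit τ0)
      (replicateRow Unit τ0 * (CD n S w 1 0 + l0 • CD n S w 1 1))
      (diagonal fun _ ↦ τ0 ⬝ᵥ (CD n S w 1 1 *ᵥ τ0)) := by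
  have hdiag (C : Matrix (Fin t) (Fin t) ℝ) :
      replicateRow Unit τ0 * C * replicateCol Unit τ0 = diagonal fun _ ↦ τ0 ⬝ᵥ (C *ᵥ τ0) := by
    ext
    rw [Matrix.mul_assoc, ← replicateCol_mulVec, replicateRow_mul_replicateCol_apply,
      diagonal_apply_eq]
  simp only [proportionalInfo, proportionalJacobian, jointInfo,
    conjTranspose_eq_transpose_of_trivial, fromBlocks_transpose, fromBlocks_multiply]
  congr 1
  · simp only [transpose_one, transpose_smul, Matrix.mul_one, Matrix.one_mul, Matrix.mul_smul,
      Matrix.smul_mul, smul_add, smul_smul, sq]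
    abel
  · simp [Matrix.add_mul]
  · simp [Matrix.mul_add]
  · simp [hdiag]

lemma posDef_toBlocks₂₂_proportionalInfo_iff :
    (proportionalInfo n S w τ0 l0).toBlocks₂₂.PosDef ↔ 0 < τ0 ⬝ᵥ (CD n S w 1 1 *ᵥ τ0) := by
  simp [proportionalInfo_eq_fromBlocks]

theorem CInfo_eq_schurComplement :
    CInfo n S w τ0 l0 = schurComplement (proportionalInfo n S w τ0 l0) := by
  rw [proportionalInfo_eq_fromBlocks, schurComplement, toBlocks_fromBlocks₁₁,
    toBlocks_fromBlocks₁₂, toBlocks_fromBlocks₂₁, toBlocks_fromBlocks₂₂, inv_subsingleton, CInfo,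
    vecMulVec_eq Unit]
  set r := τ0 ⬝ᵥ (CD n S w 1 1 *ᵥ τ0)
  simp only [diagonal_apply_eq, Ring.inverse_eq_inv', ← smul_one_eq_diagonal]
  rw [Matrix.mul_smul, Matrix.mul_one, Matrix.smul_mul]
  simp only [Matrix.mul_assoc]

variable {S}

lemma isHermitian_proportionalInfo (hS : S.PosDef) :
    (proportionalInfo n S w τ0 l0).IsHermitian := by
  refine isHermitian_conjTranspose_mul_mul _ ?_
  rw [jointInfo_eq_smul_weightedCov]
  exact (isHermitian_weightedCov_self (posSemidef_Btil hS).isHermitian _ _).smul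
    (IsSelfAdjoint.all _)

section Mixture

variable {κ : Type*} [Fintype κ] {c : κ → ℝ} {v : κ → TrtSeq p t → ℝ} {τ0}

lemma sum_smul_jointInfo_le (hS : S.PosDef) (hc₀ : ∀ a, 0 ≤ c a) (hc₁ : ∑ a, c a = 1) :
    ∑ a, c a • jointInfo n S (v a) ≤ jointInfo n S (∑ a, c a • v a) := by
  simp only [jointInfo_eq_smul_weightedCov, smul_comm _ (n : ℝ), ← Finset.smul_sum]
  rw [Matrix.le_iff, ← smul_sub]
  exact PosSemidef.smul (sum_smul_weightedCov_le (posSemidef_Btil hS) hc₀ hc₁ _ _) n.cast_nonneg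

lemma sum_smul_proportionalInfo_le (hS : S.PosDef) (hc₀ : ∀ a, 0 ≤ c a) (hc₁ : ∑ a, c a = 1) :
    ∑ a, c a • proportionalInfo n S (v a) τ0 l0 ≤
      proportionalInfo n S (∑ a, c a • v a) τ0 l0 := by
  simpa only [proportionalInfo, Matrix.mul_sum, Matrix.sum_mul, Matrix.mul_smul, Matrix.smul_mul]
    using conjTranspose_mul_mul_same_mono (sum_smul_jointInfo_le n hS hc₀ hc₁)
      (proportionalJacobian τ0 l0)

variable {n}

theorem carryoverInfo_sum_smul_pos (hS : S.PosDef) (hc₀ : ∀ a, 0 ≤ c a) (hc₁ : ∑ a, c a = 1)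
    (hv : ∀ a, 0 < τ0 ⬝ᵥ (CD n S (v a) 1 1 *ᵥ τ0)) :
    0 < τ0 ⬝ᵥ (CD n S (∑ a, c a • v a) 1 1 *ᵥ τ0) := by
  simp only [← posDef_toBlocks₂₂_proportionalInfo_iff n S _ τ0 0] at hv ⊢
  refine posDef_of_posDef_of_le (posDef_sum_smul hc₀ hc₁ hv) ?_
  have h := toBlocks₂₂_mono (sum_smul_proportionalInfo_le (τ0 := τ0) n 0 hS hc₀ hc₁ (v := v))
  convert h
  ext
  simp [toBlocks₂₂, Matrix.sum_apply]

theorem sum_smul_CInfo_le (hS : S.PosDef) (hc₀ : ∀ a, 0 ≤ c a) (hc₁ : ∑ a, c a = 1)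
    (hv : ∀ a, 0 < τ0 ⬝ᵥ (CD n S (v a) 1 1 *ᵥ τ0)) :
    ∑ a, c a • CInfo n S (v a) τ0 l0 ≤ CInfo n S (∑ a, c a • v a) τ0 l0 := by
  simp only [CInfo_eq_schurComplement]
  refine sum_smul_schurComplement_le hc₀ (fun a ↦ isHermitian_proportionalInfo _ _ _ _ hS)
    (fun a ↦ ?_) (isHermitian_proportionalInfo _ _ _ _ hS) ?_
    (sum_smul_proportionalInfo_le n l0 hS hc₀ hc₁)
  · exact (posDef_toBlocks₂₂_proportionalInfo_iff ..).2 (hv a)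
  · exact (posDef_toBlocks₂₂_proportionalInfo_iff ..).2 (carryoverInfo_sum_smul_pos hS hc₀ hc₁ hv)

end Mixture

end Designs

section TreatmentPermutation

variable {p t : ℕ} (n : ℕ) (S : Matrix (Fin p) (Fin p) ℝ) (w : TrtSeq p t → ℝ)
  (σ : Equiv.Perm (Fin t))

lemma Smat_eq_permMatrix : Smat σ = σ.permMatrix ℝ := by
  ext j i
  simp [Smat, PEquiv.toMatrix_apply, Equiv.toPEquiv_apply, eq_comm]

lemma Gmat_permSeq (i : Fin 2) (s : TrtSeq p t) : Gmat i (permSeq σ s) = Gmat i s * Smat σ := by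
  rw [Smat_eq_permMatrix, Equiv.Perm.permMatrix, PEquiv.mul_toMatrix_toPEquiv]
  ext k a
  obtain rfl | rfl : i = 0 ∨ i = 1 := by omega
  -- `congr` reconciles the two decidability instances of the incidence conditions.
  · simp only [Gmat, if_pos, Tmat, permSeq, of_apply, submatrix_apply, id_eq,
      Equiv.eq_symm_apply]
    congr
  · simp only [Gmat, one_ne_zero, if_false, Fmat, permSeq, of_apply, submatrix_apply, id_eq,
      Equiv.eq_symm_apply]
    congr

lemma Smat_mul_Bmat : Smat σ * Bmat t = Bmat t * Smat σ := by
  have hJ : Smat σ * Jmat t = Jmat t * Smat σ := by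
    rw [Smat_eq_permMatrix, Equiv.Perm.permMatrix, PEquiv.mul_toMatrix_toPEquiv,
      PEquiv.toMatrix_toPEquiv_mul]
    rfl
  simp only [Bmat, Matrix.mul_sub, Matrix.sub_mul, Matrix.mul_one, Matrix.one_mul,
    Matrix.mul_smul, Matrix.smul_mul, hJ]

lemma CD_permDesign (i j : Fin 2) :
    CD n S (permDesign σ w) i j = (Smat σ)ᵀ * CD n S w i j * Smat σ := by
  have hG (i : Fin 2) (s : TrtSeq p t) :
      Gmat i (permSeq σ s) * Bmat t = Gmat i s * Bmat t * Smat σ := by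
    rw [Gmat_permSeq, Matrix.mul_assoc, Smat_mul_Bmat, Matrix.mul_assoc]
  let e : TrtSeq p t ≃ TrtSeq p t := (Equiv.refl (Fin p)).arrowCongr σ
  have hcov := weightedCov_comp_symm (Btil S) w e
    (fun s ↦ Gmat i s * Bmat t) (fun s ↦ Gmat j s * Bmat t)
  rw [CD_eq_smul_weightedCov, CD_eq_smul_weightedCov, Matrix.mul_smul, Matrix.smul_mul,
    ← weightedCov_mul]
  simp only [← hG]
  exact congrArg _ hcov

lemma dotProduct_CD_permDesign_mulVec (i j : Fin 2) (u v : Fin t → ℝ) :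
    u ⬝ᵥ (CD n S (permDesign σ w) i j *ᵥ v) =
      (Smat σ *ᵥ u) ⬝ᵥ (CD n S w i j *ᵥ (Smat σ *ᵥ v)) := by
  rw [CD_permDesign, ← mulVec_mulVec, ← mulVec_mulVec, mulVec_transpose, dotProduct_comm,
    ← dotProduct_mulVec, dotProduct_comm]

lemma symmetrize_eq_sum_smul :
    symmetrize w = ∑ σ : Equiv.Perm (Fin t), (t.factorial : ℝ)⁻¹ • permDesign σ w := by
  ext s
  simp [symmetrize, Finset.mul_sum]

lemma sum_perm_inv_factorial : ∑ _σ : Equiv.Perm (Fin t), (t.factorial : ℝ)⁻¹ = 1 := by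
  simp [Fintype.card_perm, Nat.factorial_ne_zero]

theorem isSymmetricDesign_symmetrize : IsSymmetricDesign (symmetrize w) := by
  intro ρ s
  simp only [symmetrize]
  congr 1
  refine Fintype.sum_equiv (Equiv.mulLeft ρ⁻¹) _ _ fun σ ↦ ?_
  simp only [permDesign]
  congr 1

end TreatmentPermutation

theorem stmt1_general {p t : ℕ} (n : ℕ) {S : Matrix (Fin p) (Fin p) ℝ} (hS : S.PosDef)
    (w : TrtSeq p t → ℝ) (l0 : ℝ) (τ0 : Fin t → ℝ)
    (hC : ∀ σ : Equiv.Perm (Fin t),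
      0 < (Smat σ *ᵥ τ0) ⬝ᵥ (CD n S w 1 1 *ᵥ (Smat σ *ᵥ τ0))) :
    IsSymmetricDesign (symmetrize w) ∧
    0 < τ0 ⬝ᵥ (CD n S (symmetrize w) 1 1 *ᵥ τ0) ∧
    (CInfo n S (symmetrize w) τ0 l0 -
      ((Nat.factorial t : ℝ))⁻¹ •
        ∑ σ : Equiv.Perm (Fin t), CInfo n S (permDesign σ w) τ0 l0).PosSemidef := by
  have hpos (σ : Equiv.Perm (Fin t)) : 0 < τ0 ⬝ᵥ (CD n S (permDesign σ w) 1 1 *ᵥ τ0) := by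
    rw [dotProduct_CD_permDesign_mulVec]
    exact hC σ
  have hc₀ (_ : Equiv.Perm (Fin t)) : 0 ≤ (t.factorial : ℝ)⁻¹ := by positivity
  refine ⟨isSymmetricDesign_symmetrize w, ?_, ?_⟩ <;> rw [symmetrize_eq_sum_smul]
  · exact carryoverInfo_sum_smul_pos hS hc₀ sum_perm_inv_factorial hpos
  · rw [Finset.smul_sum]
    exact sum_smul_CInfo_le l0 hS hc₀ sum_perm_inv_factorial hpos

/-- the symmetrized design is symmetric and dominates the average
information matrix in the Loewner order. -/
theorem stmt1 (p t n : ℕ) (hp : 2 ≤ p) (ht : 3 ≤ t) (hn : 1 ≤ n)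
    (S : Matrix (Fin p) (Fin p) ℝ) (hS : S.PosDef)
    (w : TrtSeq p t → ℝ) (hw : IsDesign w) (l0 : ℝ)
    (τ0 : Fin t → ℝ) (hτsum : (∑ i, τ0 i) = 0) (hτ0 : τ0 ≠ 0)
    (hC : ∀ σ : Equiv.Perm (Fin t),
      0 < (Smat σ *ᵥ τ0) ⬝ᵥ (CD n S w 1 1 *ᵥ (Smat σ *ᵥ τ0))) :
    IsSymmetricDesign (symmetrize w) ∧
    0 < τ0 ⬝ᵥ (CD n S (symmetrize w) 1 1 *ᵥ τ0) ∧
    (CInfo n S (symmetrize w) τ0 l0 -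
      ((Nat.factorial t : ℝ))⁻¹ •
        ∑ σ : Equiv.Perm (Fin t), CInfo n S (permDesign σ w) τ0 l0).PosSemidef := by
  exact stmt1_general n hS w l0 τ0 hC
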